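/- arXiv:2406.16121 — 3 statements merged into one kernel-verified Lean document; each statement's English description precedes it below -/
import Mathlib

section
/- Let Y be a finite nonempty type, s' : Y → ℝ a family of clean values, w : Y → ℝ weights with w(y) > 0 for all y and Σ_y w(y) = 1, and β ∈ (0, 1). Define the corrupted-marginal density p(x) = Σ_y w(y) · gaussianPDFReal (√(1-β) · s'(y)) β x. Then for every x ∈ ℝ: x + β · deriv (fun x => Real.log (p x)) x = √(1-β) · Σ_y (w(y) · gaussianPDFReal (√(1-β) · s'(y)) β x / p(x)) · s'(y), i.e. x̃ + β ∇ log p(x̃) equals √(1-β) times the posterior mean of s'. -/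
open ProbabilityTheory

/-!
The Gaussian density `φ` with mean `m` and variance `v` satisfies `v φ' = (m - x) φ`. Summing this
over the components of a mixture `p` with common variance gives `v p' = ∑ wᵢ φᵢ mᵢ - x p`, and
dividing by `p` turns the sum into the posterior mean.
-/

theorem hasDerivAt_gaussianPDFReal (m : ℝ) (v : NNReal) (x : ℝ) :
    HasDerivAt (gaussianPDFReal m v) (gaussianPDFReal m v x * ((m - x) / v)) x := by
  have hexponent : HasDerivAt (fun t : ℝ ↦ -(t - m) ^ 2 / (2 * v)) ((m - x) / v) x := by
    have hsq : HasDerivAt (fun t : ℝ ↦ (t - m) ^ 2) (2 * (x - m)) x := by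
      simpa using ((hasDerivAt_id' x).sub_const m).fun_pow 2
    exact (hsq.fun_neg.div_const (2 * (v : ℝ))).congr_deriv (by ring)
  rw [gaussianPDFReal_def]
  exact (hexponent.exp.const_mul _).congr_deriv (by ring)

theorem mul_deriv_gaussianPDFReal (m : ℝ) (v : NNReal) (x : ℝ) :
    v * deriv (gaussianPDFReal m v) x = gaussianPDFReal m v x * (m - x) := by
  rw [(hasDerivAt_gaussianPDFReal m v x).deriv]
  rcases eq_or_ne v 0 with rfl | hv
  · simp
  · field_simp

/-- The density of a finite mixture of Gaussians with means `m i` and common variance `v`.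
The weights `w i` are arbitrary reals, neither normalized nor nonnegative. -/
noncomputable def gaussianMixturePDFReal {ι : Type*} (t : Finset ι) (w m : ι → ℝ) (v : NNReal)
    (x : ℝ) : ℝ :=
  ∑ i ∈ t, w i * gaussianPDFReal (m i) v x

section GaussianMixture

variable {ι : Type*} {t : Finset ι} {w : ι → ℝ} (m : ι → ℝ) {v : NNReal} (x : ℝ)

theorem gaussianMixturePDFReal_pos (ht : t.Nonempty) (hw : ∀ i ∈ t, 0 < w i) (hv : v ≠ 0) :
    0 < gaussianMixturePDFReal t w m v x :=
  Finset.sum_pos (fun i hi ↦ mul_pos (hw i hi) (gaussianPDFReal_pos _ _ _ hv)) ht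

variable (t w v)

theorem hasDerivAt_gaussianMixturePDFReal :
    HasDerivAt (gaussianMixturePDFReal t w m v)
      (∑ i ∈ t, w i * deriv (gaussianPDFReal (m i) v) x) x :=
  HasDerivAt.fun_sum fun i _ ↦
    (hasDerivAt_gaussianPDFReal (m i) v x).differentiableAt.hasDerivAt.const_mul (w i)

theorem mul_deriv_gaussianMixturePDFReal :
    v * deriv (gaussianMixturePDFReal t w m v) x =
      ∑ i ∈ t, w i * gaussianPDFReal (m i) v x * m i - x * gaussianMixturePDFReal t w m v x := by
  rw [(hasDerivAt_gaussianMixturePDFReal t w m v x).deriv, gaussianMixturePDFReal, Finset.mul_sum,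
    Finset.mul_sum, ← Finset.sum_sub_distrib]
  refine Finset.sum_congr rfl fun i _ ↦ ?_
  rw [mul_left_comm, mul_deriv_gaussianPDFReal]
  ring

variable {t w m v x}

theorem tweedie_identity_gaussian_general (hp : gaussianMixturePDFReal t w m v x ≠ 0) :
    x + v * deriv (fun x' ↦ Real.log (gaussianMixturePDFReal t w m v x')) x =
      ∑ i ∈ t, w i * gaussianPDFReal (m i) v x / gaussianMixturePDFReal t w m v x * m i := by
  have hdiff := (hasDerivAt_gaussianMixturePDFReal t w m v x).differentiableAt
  simp_rw [div_mul_eq_mul_div]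
  rw [deriv.log hdiff hp, ← mul_div_assoc, mul_deriv_gaussianMixturePDFReal, ← Finset.sum_div,
    sub_div, mul_div_cancel_right₀ x hp, add_sub_cancel]

end GaussianMixture

/-- Tweedie's identity for the Gaussian corruption kernel (Equation (13)):
`x̃ + β ∇ log p(x̃) = √(1-β) · E[s' | x̃]` for a finite mixture of Gaussians. -/
theorem tweedie_identity_gaussian
    {Y : Type*} [Fintype Y] [Nonempty Y]
    (s' : Y → ℝ) (w : Y → ℝ) (hw : ∀ y, 0 < w y) (hw1 : ∑ y, w y = 1)
    (β : NNReal) (hβ0 : 0 < β) (hβ1 : β < 1)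
    (p : ℝ → ℝ)
    (hp : ∀ x, p x = ∑ y, w y * gaussianPDFReal (Real.sqrt (1 - (β : ℝ)) * s' y) β x)
    (x : ℝ) :
    x + (β : ℝ) * deriv (fun x' => Real.log (p x')) x
      = Real.sqrt (1 - (β : ℝ)) *
          ∑ y, (w y * gaussianPDFReal (Real.sqrt (1 - (β : ℝ)) * s' y) β x / p x) * s' y := by
  obtain rfl : p = gaussianMixturePDFReal .univ w (fun y ↦ √(1 - β) * s' y) β := funext hp
  simp only [Finset.mul_sum, mul_left_comm √(1 - (β : ℝ))]
  exact tweedie_identity_gaussian_general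
    (gaussianMixturePDFReal_pos _ x Finset.univ_nonempty (fun y _ ↦ hw y) hβ0.ne').ne'
end

section
/- Let d ≥ 1, let γ_d be the d-dimensional standard Gaussian measure on Fin d → ℝ, let ψ, ν : Fin d → ℝ and Z > 0. Define φ_ω = Complex.exp (-Complex.I·⟨ω, ψ⟩ + ‖ψ‖²/2 - Real.log Z) and μ_ω = Complex.exp (-Complex.I·⟨ω, ν⟩ + ‖ν‖²/2). Then ∫ φ_ω · conj(μ_ω) dγ_d(ω) = Real.exp (⟨ψ, ν⟩ - Real.log Z) = exp(⟨ψ, ν⟩)/Z. In words: the energy-based transition density exp(ψᵀν)/Z admits the spectral (inner-product) decomposition ⟨φ_ω, μ_ω⟩ under the Gaussian measure over ω. -/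
open MeasureTheory ProbabilityTheory

/-!
By polarization, `⟪ψ, ν⟫ = ‖ψ‖² / 2 + ‖ν‖² / 2 - ‖ψ - ν‖² / 2`, so `exp ⟪ψ, ν⟫` is the Gaussian
kernel `exp (-‖ψ - ν‖² / 2)` reweighted by a function of `ψ` alone and a function of `ν` alone. The
kernel is the characteristic function of the standard Gaussian at `ν - ψ`, that is, the average over
`ω` of `exp (-i⟪ω, ψ⟫)` times the conjugate of `exp (-i⟪ω, ν⟫)`.
-/

open scoped ComplexConjugate InnerProductSpace

theorem integral_stdGaussian_euclideanSpace {ι F : Type*} [Fintype ι] [NormedAddCommGroup F]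
    [NormedSpace ℝ F] (f : EuclideanSpace ℝ ι → F) :
    ∫ x, f x ∂(stdGaussian (EuclideanSpace ℝ ι)) =
      ∫ ω : ι → ℝ, f (WithLp.toLp 2 ω) ∂(Measure.pi fun _ => gaussianReal 0 1) := by
  rw [← map_pi_eq_stdGaussian]
  exact (MeasurableEquiv.toLp 2 (ι → ℝ)).measurableEmbedding.integral_map f

section RandomFourierFeature

variable {E : Type*} [NormedAddCommGroup E] [InnerProductSpace ℝ E]

/-- The random Fourier feature `ω ↦ exp (-i⟪ω, x⟫)` of a point `x`, with the frequency `ω` as the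
random parameter; Gaussian averages of products of features recover the Gaussian kernel. -/
noncomputable def randomFourierFeature (x ω : E) : ℂ :=
  Complex.exp (-Complex.I * (⟪ω, x⟫_ℝ : ℂ))

theorem randomFourierFeature_mul_conj (x y ω : E) :
    randomFourierFeature x ω * conj (randomFourierFeature y ω) =
      Complex.exp ((⟪ω, y - x⟫_ℝ : ℂ) * Complex.I) := by
  simp only [randomFourierFeature, ← Complex.exp_conj, ← Complex.exp_add, map_mul, map_neg,
    Complex.conj_I, Complex.conj_ofReal, inner_sub_right, Complex.ofReal_sub]
  ring_nf

variable [FiniteDimensional ℝ E] [MeasurableSpace E] [BorelSpace E]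

theorem integral_randomFourierFeature_mul_conj (x y : E) :
    ∫ ω, randomFourierFeature x ω * conj (randomFourierFeature y ω) ∂(stdGaussian E) =
      Complex.exp (-‖x - y‖ ^ 2 / 2) := by
  simp_rw [randomFourierFeature_mul_conj]
  rw [← charFun_apply, charFun_stdGaussian, norm_sub_rev]

theorem ebm_spectral_decomposition_general (ψ ν : E) {Z : ℝ} (hZ : 0 < Z) :
    (∫ ω, Complex.exp (-Complex.I * (⟪ω, ψ⟫_ℝ : ℂ) + ((‖ψ‖ ^ 2 / 2 : ℝ) : ℂ) - (Real.log Z : ℂ))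
          * conj (Complex.exp (-Complex.I * (⟪ω, ν⟫_ℝ : ℂ) + ((‖ν‖ ^ 2 / 2 : ℝ) : ℂ)))
          ∂(stdGaussian E))
        = (Real.exp (⟪ψ, ν⟫_ℝ - Real.log Z) : ℂ)
      ∧ Real.exp (⟪ψ, ν⟫_ℝ - Real.log Z) = Real.exp ⟪ψ, ν⟫_ℝ / Z := by
  refine ⟨?_, by rw [Real.exp_sub, Real.exp_log hZ]⟩
  have factor (ω : E) :
      Complex.exp (-Complex.I * (⟪ω, ψ⟫_ℝ : ℂ) + ((‖ψ‖ ^ 2 / 2 : ℝ) : ℂ) - (Real.log Z : ℂ))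
          * conj (Complex.exp (-Complex.I * (⟪ω, ν⟫_ℝ : ℂ) + ((‖ν‖ ^ 2 / 2 : ℝ) : ℂ)))
        = Complex.exp ((‖ψ‖ ^ 2 / 2 + ‖ν‖ ^ 2 / 2 - Real.log Z : ℝ) : ℂ)
          * (randomFourierFeature ψ ω * conj (randomFourierFeature ν ω)) := by
    simp only [randomFourierFeature, ← Complex.exp_conj, ← Complex.exp_add, map_add,
      Complex.conj_ofReal, Complex.ofReal_add, Complex.ofReal_sub]
    ring_nf
  have quadratic_expansion :
      ⟪ψ, ν⟫_ℝ = ‖ψ‖ ^ 2 / 2 + ‖ν‖ ^ 2 / 2 - ‖ψ - ν‖ ^ 2 / 2 := by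
    rw [norm_sub_sq_real]
    ring
  simp_rw [factor]
  rw [integral_const_mul, integral_randomFourierFeature_mul_conj, ← Complex.exp_add,
    Complex.ofReal_exp, quadratic_expansion]
  push_cast
  ring_nf

end RandomFourierFeature

/-- Spectral (inner-product) decomposition of the energy-based transition density
`exp(ψᵀν)/Z = ⟨φ_ω, μ_ω⟩` under the standard Gaussian measure over ω
(Equations (9)–(10) of the paper). -/
theorem ebm_spectral_decomposition (d : ℕ) (hd : 1 ≤ d)
    (ψ ν : Fin d → ℝ) (Z : ℝ) (hZ : 0 < Z) :
    (∫ ω : Fin d → ℝ,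
        Complex.exp (-Complex.I * ((∑ j, ω j * ψ j : ℝ) : ℂ)
            + (((∑ j, ψ j ^ 2) / 2 : ℝ) : ℂ) - ((Real.log Z : ℝ) : ℂ))
          * (starRingEnd ℂ)
              (Complex.exp (-Complex.I * ((∑ j, ω j * ν j : ℝ) : ℂ)
                + (((∑ j, ν j ^ 2) / 2 : ℝ) : ℂ)))
          ∂(Measure.pi fun _ => gaussianReal 0 1))
        = ((Real.exp ((∑ j, ψ j * ν j) - Real.log Z) : ℝ) : ℂ)
      ∧ Real.exp ((∑ j, ψ j * ν j) - Real.log Z)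
        = Real.exp (∑ j, ψ j * ν j) / Z := by
  simpa only [integral_stdGaussian_euclideanSpace, EuclideanSpace.real_norm_sq_eq,
    PiLp.inner_apply, RCLike.inner_apply, conj_trivial, mul_comm] using
    ebm_spectral_decomposition_general (WithLp.toLp 2 ψ) (WithLp.toLp 2 ν) hZ
end

section
/- Let T ∈ ℕ, β : Fin T → ℝ with 0 < β_t < 1 for every t, x₀ ∈ ℝ, and α := ∏_{t} (1 - β_t). Define F : (Fin T → ℝ) → ℝ by iterating the forward diffusion recursion starting from x₀: given noise vector ε, set y_0 = x₀ and y_{t+1} = √(1 - β_t)·y_t + √(β_t)·ε_t, with F(ε) the final value y_T. Then the pushforward of the T-fold product of standard Gaussians, Measure.pi (fun _ => gaussianReal 0 1), under F equals gaussianReal (√α · x₀) (1 - α). That is, the T-step forward-corrupted marginal given x₀ is q(x_T | x₀) = N(√(α_T) x₀, (1 - α_T)). -/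
open MeasureTheory ProbabilityTheory

/-!
The recursion is affine, so it can be solved explicitly: `y_T = (∏ t, a_t) y_0 + ∑ t, c_t ε_t` with
`c_t = b_t ∏ s > t, a_s`. A linear combination of independent Gaussians is Gaussian, with variance
`∑ t, c_t²`. Since `a_t² + b_t² = (1 - β_t) + β_t = 1`, expanding the product
`1 = ∏ t, (a_t² + b_t²)` by the last index at which the factor `b_t²` is chosen evaluates this
variance to `1 - ∏ t, a_t²`.
-/

open scoped NNReal

section Algebra

variable {R : Type*}

lemma affine_recurrence_eq [CommSemiring R] {T : ℕ} {a u : Fin T → R} {y : ℕ → R}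
    (hy : ∀ t : Fin T, y (t + 1) = a t * y t + u t) :
    y T = (∏ t, a t) * y 0 + ∑ t, (∏ s with t < s, a s) * u t := by
  induction T with
  | zero => simp
  | succ T ih =>
    have hlast := hy (Fin.last T)
    rw [Fin.val_last, ih fun t ↦ hy t.castSucc] at hlast
    have hprod (t : Fin T) : ∏ s with t.castSucc < s, a s =
        (∏ s with t < s, a s.castSucc) * a (Fin.last T) := by
      simp [Finset.prod_filter, Fin.prod_univ_castSucc, Fin.castSucc_lt_last]
    have hempty : ∏ s with Fin.last T < s, a s = 1 := by
      simp [Finset.filter_false_of_mem, Fin.le_last]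
    calc
      y (T + 1) = (∏ t : Fin T, a t.castSucc) * a (Fin.last T) * y 0
          + (∑ t : Fin T, (∏ s with t < s, a s.castSucc) * u t.castSucc) * a (Fin.last T)
          + u (Fin.last T) := by rw [hlast]; ring
      _ = (∏ t, a t) * y 0 + ∑ t, (∏ s with t < s, a s) * u t := by
        simp only [Fin.prod_univ_castSucc, Fin.sum_univ_castSucc, hprod, hempty, one_mul,
          Finset.sum_mul, mul_right_comm, add_assoc]

lemma sum_prod_gt_mul_eq_one_sub_prod [CommRing R] {ι : Type*} [LinearOrder ι] (s : Finset ι)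
    {f g : ι → R} (hfg : ∀ i ∈ s, f i + g i = 1) :
    ∑ i ∈ s, (∏ j ∈ s with i < j, f j) * g i = 1 - ∏ i ∈ s, f i := by
  have hone (p : ι → Prop) [DecidablePred p] : ∏ i ∈ s with p i, (f i + g i) = 1 :=
    Finset.prod_eq_one fun i hi ↦ hfg i (Finset.mem_filter.1 hi).1
  have hexpand := Finset.prod_add_ordered s f g
  simp only [Finset.prod_eq_one hfg, hone, mul_one] at hexpand
  rw [hexpand, add_sub_cancel_left]
  exact Finset.sum_congr rfl fun i _ ↦ mul_comm _ _

end Algebra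

section Gaussian

variable {Ω : Type*} {mΩ : MeasurableSpace Ω} {P : Measure Ω}

lemma hasLaw_sum_gaussianReal {ι : Type*} [Fintype ι] {X : ι → Ω → ℝ} {m : ι → ℝ} {v : ι → ℝ≥0}
    (hindep : iIndepFun X P) (hX : ∀ i, HasLaw (X i) (gaussianReal (m i) (v i)) P) :
    HasLaw (fun ω ↦ ∑ i, X i ω) (gaussianReal (∑ i, m i) (∑ i, v i)) P where
  aemeasurable := Finset.aemeasurable_fun_sum _ fun i _ ↦ (hX i).aemeasurable
  map_eq := by
    have := hindep.isProbabilityMeasure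
    refine Measure.ext_of_charFun ?_
    rw [hindep.charFun_map_fun_sum_eq_prod fun i ↦ (hX i).aemeasurable]
    ext t
    simp only [Finset.prod_apply, (hX _).map_eq, charFun_gaussianReal, ← Complex.exp_sum]
    push_cast
    simp only [Finset.sum_sub_distrib, Finset.mul_sum, Finset.sum_mul, Finset.sum_div]

variable {T : ℕ} {ε : Fin T → Ω → ℝ}

theorem hasLaw_affine_recurrence {a b : Fin T → ℝ} {x₀ : ℝ} {y : Ω → ℕ → ℝ}
    (hindep : iIndepFun ε P) (hε : ∀ t, HasLaw (ε t) (gaussianReal 0 1) P)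
    (hy0 : ∀ ω, y ω 0 = x₀)
    (hy : ∀ ω, ∀ t : Fin T, y ω (t + 1) = a t * y ω t + b t * ε t ω) :
    HasLaw (fun ω ↦ y ω T) (gaussianReal ((∏ t, a t) * x₀)
      (∑ t, ((∏ s with t < s, a s) * b t) ^ 2).toNNReal) P := by
  set c : Fin T → ℝ := fun t ↦ (∏ s with t < s, a s) * b t
  have hsolution : (fun ω ↦ y ω T) = fun ω ↦ (∏ t, a t) * x₀ + ∑ t, c t * ε t ω := by
    ext ω
    simp only [affine_recurrence_eq (hy ω), hy0, c, mul_assoc]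
  have hindep_scaled : iIndepFun (fun t ω ↦ c t * ε t ω) P :=
    hindep.comp (fun t x ↦ c t * x) fun t ↦ measurable_const_mul (c t)
  have hnoise := hasLaw_sum_gaussianReal hindep_scaled fun t ↦ gaussianReal_const_mul (hε t) (c t)
  rw [hsolution]
  convert gaussianReal_const_add hnoise ((∏ t, a t) * x₀) using 2
  · simp
  · rw [Real.toNNReal_sum_of_nonneg fun t _ ↦ sq_nonneg (c t)]
    simp [Real.toNNReal_of_nonneg, sq_nonneg]

theorem hasLaw_affine_recurrence_of_sq_add_sq_eq_one {a b : Fin T → ℝ} {x₀ : ℝ} {y : Ω → ℕ → ℝ}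
    (hab : ∀ t, a t ^ 2 + b t ^ 2 = 1)
    (hindep : iIndepFun ε P) (hε : ∀ t, HasLaw (ε t) (gaussianReal 0 1) P)
    (hy0 : ∀ ω, y ω 0 = x₀)
    (hy : ∀ ω, ∀ t : Fin T, y ω (t + 1) = a t * y ω t + b t * ε t ω) :
    HasLaw (fun ω ↦ y ω T)
      (gaussianReal ((∏ t, a t) * x₀) (1 - ∏ t, a t ^ 2).toNNReal) P := by
  rw [← sum_prod_gt_mul_eq_one_sub_prod Finset.univ fun t _ ↦ hab t]
  simpa only [mul_pow, Finset.prod_pow] using hasLaw_affine_recurrence hindep hε hy0 hy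

theorem forward_diffusion_marginal_general {β : Fin T → ℝ} {x₀ : ℝ} {y : Ω → ℕ → ℝ}
    (hβ : ∀ t, β t ∈ Set.Icc 0 1)
    (hindep : iIndepFun ε P) (hε : ∀ t, HasLaw (ε t) (gaussianReal 0 1) P)
    (hy0 : ∀ ω, y ω 0 = x₀)
    (hy : ∀ ω, ∀ t : Fin T, y ω (t + 1) = √(1 - β t) * y ω t + √(β t) * ε t ω) :
    HasLaw (fun ω ↦ y ω T)
      (gaussianReal (√(∏ t, (1 - β t)) * x₀) (1 - ∏ t, (1 - β t)).toNNReal) P := by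
  have hsq_signal (t : Fin T) : √(1 - β t) ^ 2 = 1 - β t := Real.sq_sqrt (sub_nonneg.2 (hβ t).2)
  have hsq_noise (t : Fin T) : √(β t) ^ 2 = β t := Real.sq_sqrt (hβ t).1
  have hlaw := hasLaw_affine_recurrence_of_sq_add_sq_eq_one
    (fun t ↦ by rw [hsq_signal, hsq_noise, sub_add_cancel]) hindep hε hy0 hy
  rw [Real.sqrt_prod _ fun t _ ↦ sub_nonneg.2 (hβ t).2]
  simpa only [hsq_signal] using hlaw

end Gaussian

/-- Closed-form marginal of the `T`-step forward diffusion process: iterating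
`y_{t+1} = √(1-β_t)·y_t + √(β_t)·ε_t` from `x₀` with independent standard Gaussian noise
yields the law `N(√α · x₀, 1 - α)`, where `α = ∏ t, (1 - β t)`. -/
theorem forward_diffusion_marginal (T : ℕ) (β : Fin T → ℝ)
    (hβ : ∀ t, 0 < β t ∧ β t < 1) (x₀ : ℝ)
    (α : ℝ) (hα : α = ∏ t, (1 - β t))
    (y : (Fin T → ℝ) → ℕ → ℝ)
    (hy0 : ∀ ε, y ε 0 = x₀)
    (hyrec : ∀ ε, ∀ t : Fin T,
      y ε ((t : ℕ) + 1) = Real.sqrt (1 - β t) * y ε (t : ℕ) + Real.sqrt (β t) * ε t)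
    (F : (Fin T → ℝ) → ℝ) (hF : ∀ ε, F ε = y ε T) :
    Measure.map F (Measure.pi fun _ : Fin T => gaussianReal 0 1)
      = gaussianReal (Real.sqrt α * x₀) ((1 - α).toNNReal) := by
  rw [hα, funext hF]
  exact (forward_diffusion_marginal_general (fun t ↦ ⟨(hβ t).1.le, (hβ t).2.le⟩)
    (iIndepFun_pi (X := fun _ x ↦ x) fun _ ↦ aemeasurable_id)
    (fun t ↦ (measurePreserving_eval (fun _ ↦ gaussianReal 0 1) t).hasLaw) hy0 hyrec).map_eq
end
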